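/- There exists a constant C > 0 such that for every m ≥ 1, N = 2^m, and every function u that is four times continuously differentiable on a neighbourhood of [0,1]² and vanishes on the boundary of [0,1]², taking the maximal level k̃ = log₂(N) − 1 = m − 1, the multiscale interpolant satisfies |||u − I^{(k̃)}_{N,N}u||| ≤ C N^{−1} ( |u|₂ + ‖∂⁴u/∂x²∂y²‖_{0,Ω} ). -/

import Mathlib

open MeasureTheory Finset

noncomputable section

/-- The hat function `ψ_i^N` on the uniform mesh of `[0,1]` with `N` intervals. -/
def hat (N i : ℕ) (x : ℝ) : ℝ :=
  if ((i : ℝ) - 1) / N ≤ x ∧ x ≤ (i : ℝ) / N then N * (x - ((i : ℝ) - 1) / N)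
  else if (i : ℝ) / N ≤ x ∧ x ≤ ((i : ℝ) + 1) / N then N * (((i : ℝ) + 1) / N - x)
  else 0

/-- The nodal piecewise bilinear interpolant `I_{Nx,Ny} u`. -/
def interp (Nx Ny : ℕ) (u : ℝ × ℝ → ℝ) : ℝ × ℝ → ℝ := fun p =>
  ∑ i ∈ range (Nx + 1), ∑ j ∈ range (Ny + 1),
    u ((i : ℝ) / Nx, (j : ℝ) / Ny) * hat Nx i p.1 * hat Ny j p.2

/-- The one-directional interpolant `I_{Nx,0} u` (interpolation in the `x`-direction only). -/
def interpX (Nx : ℕ) (u : ℝ × ℝ → ℝ) : ℝ × ℝ → ℝ := fun p =>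
  ∑ i ∈ range (Nx + 1), u ((i : ℝ) / Nx, p.2) * hat Nx i p.1

/-- The one-directional interpolant `I_{0,Ny} u` (interpolation in the `y`-direction only). -/
def interpY (Ny : ℕ) (u : ℝ × ℝ → ℝ) : ℝ × ℝ → ℝ := fun p =>
  ∑ j ∈ range (Ny + 1), u (p.1, (j : ℝ) / Ny) * hat Ny j p.2

/-- The two-scale interpolant `Î_{N,N} u = I_{N,σ}u + I_{σ,N}u − I_{σ,σ}u`. -/
def twoScale (N σ : ℕ) (u : ℝ × ℝ → ℝ) : ℝ × ℝ → ℝ := fun p =>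
  interp N σ u p + interp σ N u p - interp σ σ u p

/-- The multiscale interpolant
`I^{(k)}_{N,N} u = Σ_{i=0}^{k} I_{N/2^i, N/2^{k−i}}u − Σ_{i=1}^{k} I_{N/2^i, N/2^{k+1−i}}u`. -/
def msInterp (N k : ℕ) (u : ℝ × ℝ → ℝ) : ℝ × ℝ → ℝ := fun p =>
  ∑ i ∈ range (k + 1), interp (N / 2 ^ i) (N / 2 ^ (k - i)) u p
    - ∑ i ∈ Finset.Icc 1 k, interp (N / 2 ^ i) (N / 2 ^ (k + 1 - i)) u p

/-- The closed square `[0,1]²`. -/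
def unitSquare : Set (ℝ × ℝ) := Set.Icc (0 : ℝ) 1 ×ˢ Set.Icc (0 : ℝ) 1

/-- The open square `Ω = (0,1)²`. -/
def Omega2 : Set (ℝ × ℝ) := Set.Ioo (0 : ℝ) 1 ×ˢ Set.Ioo (0 : ℝ) 1

/-- Partial derivative in `x` (defined a.e. for Lipschitz functions; junk value `0` elsewhere). -/
def pderivX (v : ℝ × ℝ → ℝ) : ℝ × ℝ → ℝ := fun p => deriv (fun x => v (x, p.2)) p.1

/-- Partial derivative in `y` (defined a.e. for Lipschitz functions; junk value `0` elsewhere). -/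
def pderivY (v : ℝ × ℝ → ℝ) : ℝ × ℝ → ℝ := fun p => deriv (fun y => v (p.1, y)) p.2

/-- The `L²(Ω)` norm `‖v‖_{0,Ω}`. -/
def L2norm (v : ℝ × ℝ → ℝ) : ℝ := Real.sqrt (∫ p in Omega2, (v p) ^ 2)

/-- The energy norm `|||v||| = (∫_Ω |∇v|² + ∫_Ω v²)^{1/2}`, gradients taken a.e. -/
def energyNorm (v : ℝ × ℝ → ℝ) : ℝ :=
  Real.sqrt (∫ p in Omega2, ((pderivX v p) ^ 2 + (pderivY v p) ^ 2 + (v p) ^ 2))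

/-- `u` is four times continuously differentiable on a neighbourhood of `[0,1]²`. -/
def C4Near (u : ℝ × ℝ → ℝ) : Prop :=
  ∃ U : Set (ℝ × ℝ), IsOpen U ∧ unitSquare ⊆ U ∧ ContDiffOn ℝ 4 u U

/-- `u` vanishes on the boundary of `[0,1]²`. -/
def VanishOnBoundary (u : ℝ × ℝ → ℝ) : Prop :=
  ∀ p ∈ unitSquare, (p.1 = 0 ∨ p.1 = 1 ∨ p.2 = 0 ∨ p.2 = 1) → u p = 0

/-- The seminorm `|u|₂ = ‖u_xx‖_{0,Ω} + ‖u_xy‖_{0,Ω} + ‖u_yy‖_{0,Ω}`. -/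
def semi2 (u : ℝ × ℝ → ℝ) : ℝ :=
  L2norm (pderivX (pderivX u)) + L2norm (pderivX (pderivY u)) + L2norm (pderivY (pderivY u))

/-- The mixed fourth derivative `∂⁴u/∂x²∂y²`. -/
def uxxyy (u : ℝ × ℝ → ℝ) : ℝ × ℝ → ℝ := pderivX (pderivX (pderivY (pderivY u)))

/-- The bilinear form `B(v,w) = ∫_Ω ∇v·∇w + ∫_Ω v w`, gradients taken a.e. -/
def Bform (v w : ℝ × ℝ → ℝ) : ℝ :=
  ∫ p in Omega2, (pderivX v p * pderivX w p + pderivY v p * pderivY w p + v p * w p)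

theorem hat_eq_max {n : ℕ} (hn : 0 < n) (i : ℕ) (x : ℝ) :
    hat n i x = max 0 (1 - |n * x - i|) := by
  have hn' : (0 : ℝ) < n := by exact_mod_cast hn
  have e1 : ((i : ℝ) - 1) / n ≤ x ↔ (i : ℝ) - 1 ≤ n * x := by rw [div_le_iff₀ hn', mul_comm]
  have e2 : x ≤ (i : ℝ) / n ↔ n * x ≤ i := by rw [le_div_iff₀ hn', mul_comm]
  have e3 : (i : ℝ) / n ≤ x ↔ (i : ℝ) ≤ n * x := by rw [div_le_iff₀ hn', mul_comm]
  have e4 : x ≤ ((i : ℝ) + 1) / n ↔ n * x ≤ i + 1 := by rw [le_div_iff₀ hn', mul_comm]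
  have e5 : (n : ℝ) * (x - ((i : ℝ) - 1) / n) = n * x - (i - 1) := by field_simp
  have e6 : (n : ℝ) * (((i : ℝ) + 1) / n - x) = i + 1 - n * x := by field_simp
  simp only [hat, e1, e2, e3, e4, e5, e6]
  split_ifs with h1 h2
  · rw [abs_of_nonpos (by linarith), max_eq_right (by linarith)]; ring
  · rw [abs_of_nonneg (by linarith), max_eq_right (by linarith)]; ring
  · rw [max_eq_left]
    by_contra! hlt
    have h3 : |(n : ℝ) * x - i| < 1 := by linarith
    rw [abs_lt] at h3
    rcases le_total ((n : ℝ) * x) i with h | h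
    · exact h1 ⟨by linarith, h⟩
    · exact h2 ⟨h, by linarith⟩

theorem continuous_hat {n : ℕ} (hn : 0 < n) (i : ℕ) : Continuous (hat n i) := by
  rw [funext (hat_eq_max hn i)]
  fun_prop

/-- The univariate piecewise linear interpolant on the uniform mesh with `n` intervals. -/
def linInterp (n : ℕ) (f : ℝ → ℝ) (x : ℝ) : ℝ :=
  ∑ i ∈ range (n + 1), f ((i : ℝ) / n) * hat n i x

/-- The error of univariate piecewise linear interpolation. -/
def linErr (n : ℕ) (f : ℝ → ℝ) (x : ℝ) : ℝ := f x - linInterp n f x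

theorem linInterp_of_mem_cell {n i : ℕ} (hn : 0 < n) (hi : i < n) (f : ℝ → ℝ) {x : ℝ}
    (hx : x ∈ Set.Icc ((i : ℝ) / n) (((i : ℝ) + 1) / n)) :
    linInterp n f x = f (i / n) * (i + 1 - n * x) + f ((i + 1) / n) * (n * x - i) := by
  have hn' : (0 : ℝ) < n := by exact_mod_cast hn
  obtain ⟨hx1, hx2⟩ := hx
  rw [div_le_iff₀ hn', mul_comm] at hx1
  rw [le_div_iff₀ hn', mul_comm] at hx2
  unfold linInterp
  rw [Finset.sum_eq_add (i : ℕ) (i + 1) (by omega)]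
  · rw [hat_eq_max hn, hat_eq_max hn]
    push_cast
    rw [abs_of_nonneg (by linarith), abs_of_nonpos (by linarith), max_eq_right (by linarith),
      max_eq_right (by linarith)]
    ring
  · intro j _ hj
    rw [hat_eq_max hn, max_eq_left, mul_zero]
    rcases lt_or_gt_of_ne hj.1 with h | h
    · have h' : (j : ℝ) + 1 ≤ i := by exact_mod_cast h
      linarith [le_abs_self ((n : ℝ) * x - j)]
    · have h' : (i : ℝ) + 2 ≤ j := by
        have : i + 2 ≤ j := by have := hj.2; omega
        exact_mod_cast this
      linarith [neg_abs_le ((n : ℝ) * x - j)]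
  · intro h; exact absurd (Finset.mem_range.2 (by omega)) h
  · intro h; exact absurd (Finset.mem_range.2 (by omega)) h

theorem hasDerivAt_sub_affine {f : ℝ → ℝ} {f' x : ℝ} (hf : HasDerivAt f f' x) (A B c d : ℝ) :
    HasDerivAt (fun x : ℝ => f x - (A * (d + 1 - c * x) + B * (c * x - d)))
      (f' - c * (B - A)) x := by
  have h : HasDerivAt (fun x : ℝ => A * (d + 1 - c * x) + B * (c * x - d)) (c * (B - A)) x := by
    have e : (fun x : ℝ => A * (d + 1 - c * x) + B * (c * x - d))
        = fun x => c * (B - A) * x + (A * (d + 1) - B * d) := by funext x; ring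
    rw [e]
    simpa using ((hasDerivAt_id x).const_mul (c * (B - A))).add_const (A * (d + 1) - B * d)
  exact hf.sub h

theorem lintegral_biUnion_finset_le {α ι : Type*} [MeasurableSpace α] {μ : Measure α}
    (s : Finset ι) (t : ι → Set α) (f : α → ENNReal) :
    ∫⁻ x in ⋃ i ∈ s, t i, f x ∂μ ≤ ∑ i ∈ s, ∫⁻ x in t i, f x ∂μ := by
  classical
  induction s using Finset.induction_on with
  | empty => simp
  | insert a s ha ih =>
    rw [Finset.set_biUnion_insert, Finset.sum_insert ha]
    exact (lintegral_union_le _ _ _).trans (by gcongr)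

theorem linErr_hasDerivAt {n i : ℕ} (hn : 0 < n) (hi : i < n) {f : ℝ → ℝ} {x f' : ℝ}
    (hf : HasDerivAt f f' x) (hx : x ∈ Set.Ioo ((i : ℝ) / n) (((i : ℝ) + 1) / n)) :
    HasDerivAt (linErr n f) (f' - n * (f ((i + 1) / n) - f (i / n))) x := by
  have h1 := hasDerivAt_sub_affine hf (f (i / n)) (f ((i + 1) / n)) n i
  refine h1.congr_of_eventuallyEq ?_
  filter_upwards [isOpen_Ioo.mem_nhds hx] with y hy
  simp only [linErr]
  rw [linInterp_of_mem_cell hn hi f ⟨hy.1.le, hy.2.le⟩]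

theorem abs_sub_le_integral_abs_deriv {f f' : ℝ → ℝ} (hf : ∀ x, HasDerivAt f (f' x) x)
    (hc : Continuous f') {a b x y : ℝ} (hx : x ∈ Set.Icc a b) (hy : y ∈ Set.Icc a b) :
    |f x - f y| ≤ ∫ t in a..b, |f' t| := by
  wlog h : y ≤ x generalizing x y
  · rw [abs_sub_comm]; exact this hy hx (le_of_not_ge h)
  rw [← intervalIntegral.integral_eq_sub_of_hasDerivAt (fun t _ => hf t)
    (hc.intervalIntegrable _ _)]
  refine (intervalIntegral.abs_integral_le_integral_abs h).trans ?_
  exact intervalIntegral.integral_mono_interval hy.1 h hx.2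
    (Filter.Eventually.of_forall fun t => abs_nonneg _) (hc.abs.intervalIntegrable _ _)

theorem cell_lt {n : ℕ} (hn : 0 < n) (i : ℕ) : (i : ℝ) / n < ((i : ℝ) + 1) / n := by
  have hn' : (0 : ℝ) < n := by exact_mod_cast hn
  gcongr; linarith

theorem abs_linErr_le {n i : ℕ} (hn : 0 < n) (hi : i < n) {f f' : ℝ → ℝ}
    (hf : ∀ x, HasDerivAt f (f' x) x) (hc : Continuous f') {x : ℝ}
    (hx : x ∈ Set.Ioo ((i : ℝ) / n) (((i : ℝ) + 1) / n)) :
    |linErr n f x| ≤ ∫ t in ((i : ℝ) / n)..(((i : ℝ) + 1) / n), |f' t| := by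
  have hn' : (0 : ℝ) < n := by exact_mod_cast hn
  have hx' := Set.Ioo_subset_Icc_self hx
  have hlt := cell_lt hn i
  have ha := abs_sub_le_integral_abs_deriv hf hc hx' (Set.left_mem_Icc.2 hlt.le)
  have hb := abs_sub_le_integral_abs_deriv hf hc hx' (Set.right_mem_Icc.2 hlt.le)
  obtain ⟨hx1, hx2⟩ := hx
  rw [div_lt_iff₀ hn', mul_comm] at hx1
  rw [lt_div_iff₀ hn', mul_comm] at hx2
  have e : linErr n f x = (i + 1 - n * x) * (f x - f (i / n))
      + (n * x - i) * (f x - f ((i + 1) / n)) := by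
    rw [linErr, linInterp_of_mem_cell hn hi f hx']; ring
  rw [e]
  refine (abs_add_le _ _).trans ?_
  rw [abs_mul, abs_mul, abs_of_pos (by linarith : (0 : ℝ) < i + 1 - n * x),
    abs_of_pos (by linarith : (0 : ℝ) < n * x - i)]
  set J := ∫ t in ((i : ℝ) / n)..(((i : ℝ) + 1) / n), |f' t|
  calc _ ≤ (i + 1 - n * x) * J + (n * x - i) * J := by
        gcongr
    _ = J := by ring

theorem abs_deriv_sub_slope_le {n : ℕ} (i : ℕ) (hn : 0 < n) {f f' f'' : ℝ → ℝ}
    (hf : ∀ x, HasDerivAt f (f' x) x) (hf' : ∀ x, HasDerivAt f' (f'' x) x)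
    (hc : Continuous f'') {x : ℝ} (hx : x ∈ Set.Icc ((i : ℝ) / n) (((i : ℝ) + 1) / n)) :
    |f' x - n * (f ((i + 1) / n) - f (i / n))|
      ≤ ∫ t in ((i : ℝ) / n)..(((i : ℝ) + 1) / n), |f'' t| := by
  have hn' : (0 : ℝ) < n := by exact_mod_cast hn
  obtain ⟨ξ, hξ, hξ'⟩ := exists_hasDerivAt_eq_slope f f' (cell_lt hn i)
    (fun t _ => (hf t).continuousAt.continuousWithinAt) (fun t _ => hf t)
  have : (n : ℝ) * (f ((i + 1) / n) - f (i / n)) = f' ξ := by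
    rw [hξ', div_sub_div_same]; field_simp; ring
  rw [this]
  exact abs_sub_le_integral_abs_deriv hf' hc hx (Set.Ioo_subset_Icc_self hξ)

theorem abs_linErr_le_second {n i : ℕ} (hn : 0 < n) (hi : i < n) {f f' f'' : ℝ → ℝ}
    (hf : ∀ x, HasDerivAt f (f' x) x) (hf' : ∀ x, HasDerivAt f' (f'' x) x)
    (hc : Continuous f'') {x : ℝ} (hx : x ∈ Set.Ioo ((i : ℝ) / n) (((i : ℝ) + 1) / n)) :
    |linErr n f x| ≤ 1 / n * ∫ t in ((i : ℝ) / n)..(((i : ℝ) + 1) / n), |f'' t| := by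
  have hn' : (0 : ℝ) < n := by exact_mod_cast hn
  set J := ∫ t in ((i : ℝ) / n)..(((i : ℝ) + 1) / n), |f'' t| with hJ
  have h1 := fun t => hasDerivAt_sub_affine (hf t) (f (i / n)) (f ((i + 1) / n)) n i
  have h2 := (convex_Icc ((i : ℝ) / n)
    (((i : ℝ) + 1) / n)).norm_image_sub_le_of_norm_hasDerivWithin_le
    (fun t ht => (h1 t).hasDerivWithinAt)
    (fun t ht => (abs_deriv_sub_slope_le i hn hf hf' hc ht)) (Set.left_mem_Icc.2 (cell_lt hn i).le)
    (Set.Ioo_subset_Icc_self hx)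
  have e : linErr n f x = (f x - (f (i / n) * (i + 1 - n * x)
      + f ((i + 1) / n) * (n * x - i))) - (f (i / n) - (f (i / n) * (i + 1 - n * (i / n))
      + f ((i + 1) / n) * (n * (i / n) - i))) := by
    rw [linErr, linInterp_of_mem_cell hn hi f (Set.Ioo_subset_Icc_self hx)]
    field_simp; ring
  rw [e]
  refine h2.trans ?_
  rw [← hJ, mul_comm]
  have hJ0 : 0 ≤ J := intervalIntegral.integral_nonneg (cell_lt hn i).le fun t _ => abs_nonneg _
  gcongr
  rw [Real.norm_eq_abs, abs_of_pos (sub_pos.2 hx.1)]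
  have := hx.2
  rw [add_div] at this
  linarith

/-- Lebesgue measure on the open unit interval. -/
abbrev unitMeasure : Measure ℝ := volume.restrict (Set.Ioo (0 : ℝ) 1)

theorem eLpNorm_two_sq {α : Type*} [MeasurableSpace α] (f : α → ℝ) (μ : Measure α) :
    eLpNorm f 2 μ ^ 2 = ∫⁻ x, ENNReal.ofReal (f x ^ 2) ∂μ := by
  have := eLpNorm_nnreal_pow_eq_lintegral (f := f) (μ := μ) (p := 2) (by norm_num)
  simp only [NNReal.coe_ofNat, ENNReal.rpow_ofNat] at this
  norm_cast at this ⊢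
  refine this.trans (lintegral_congr fun x => ?_)
  rw [← ofReal_norm, ← ENNReal.ofReal_pow (norm_nonneg _), Real.norm_eq_abs, sq_abs]

theorem sq_integral_abs_le {φ : ℝ → ℝ} (hφ : Continuous φ) {a b : ℝ} (hab : a < b) :
    (∫ t in a..b, |φ t|) ^ 2 ≤ (b - a) * ∫ t in a..b, φ t ^ 2 := by
  set J := ∫ t in a..b, |φ t|
  have h0 : 0 ≤ ∫ t in a..b, ((b - a) * |φ t| - J) ^ 2 :=
    intervalIntegral.integral_nonneg hab.le fun t _ => sq_nonneg _
  have e : ∀ t, ((b - a) * |φ t| - J) ^ 2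
      = (b - a) ^ 2 * φ t ^ 2 - 2 * (b - a) * J * |φ t| + J ^ 2 := by
    intro t; rw [← sq_abs (φ t)]; ring
  simp_rw [e] at h0
  rw [intervalIntegral.integral_add, intervalIntegral.integral_sub,
    intervalIntegral.integral_const_mul, intervalIntegral.integral_const_mul,
    intervalIntegral.integral_const, smul_eq_mul] at h0
  · change 0 ≤ _ - 2 * (b - a) * J * J + _ at h0
    have hp : 0 < b - a := sub_pos.2 hab
    refine le_of_mul_le_mul_left (a := b - a) ?_ hp
    nlinarith
  all_goals exact Continuous.intervalIntegrable (by fun_prop) _ _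

theorem eLpNorm_le_of_cell_bound {n : ℕ} (hn : 0 < n) {φ g : ℝ → ℝ} (hφ : Continuous φ) {c : ℝ}
    (hc : 0 ≤ c)
    (h : ∀ i < n, ∀ x ∈ Set.Ioo ((i : ℝ) / n) (((i : ℝ) + 1) / n),
      |g x| ≤ c * ∫ t in ((i : ℝ) / n)..(((i : ℝ) + 1) / n), |φ t|) :
    eLpNorm g 2 unitMeasure ≤ ENNReal.ofReal (c * (1 / n)) * eLpNorm φ 2 unitMeasure := by
  have hn' : (0 : ℝ) < n := by exact_mod_cast hn
  have key : ∫⁻ x, ENNReal.ofReal (g x ^ 2) ∂unitMeasure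
      ≤ ENNReal.ofReal (c * (1 / n)) ^ 2 * ∫⁻ x, ENNReal.ofReal (φ x ^ 2) ∂unitMeasure := by
    have hcover : Set.Ioo (0 : ℝ) 1 ⊆
        ⋃ i ∈ range n, Set.Ico ((i : ℝ) / n) (((i : ℝ) + 1) / n) := by
      intro x hx
      have hfl : 0 ≤ (n : ℝ) * x := by have := hx.1; positivity
      simp only [Set.mem_iUnion, Finset.mem_range]
      refine ⟨⌊(n : ℝ) * x⌋₊, ?_, ?_, ?_⟩
      · rw [Nat.floor_lt hfl]; nlinarith [hx.2]
      · rw [div_le_iff₀ hn', mul_comm x]; exact Nat.floor_le hfl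
      · rw [lt_div_iff₀ hn', mul_comm x]; exact Nat.lt_floor_add_one _
    have hcell : ∀ i ∈ range n, ∫⁻ x in Set.Ico ((i : ℝ) / n) (((i : ℝ) + 1) / n),
        ENNReal.ofReal (g x ^ 2) ≤ ENNReal.ofReal ((c * (1 / n)) ^ 2 *
          ∫ t in ((i : ℝ) / n)..(((i : ℝ) + 1) / n), φ t ^ 2) := by
      intro i hi
      have hlen : ((i : ℝ) + 1) / n - (i : ℝ) / n = 1 / n := by ring
      have hq := sq_integral_abs_le hφ (cell_lt hn i)
      rw [hlen] at hq
      set J := ∫ t in ((i : ℝ) / n)..(((i : ℝ) + 1) / n), |φ t|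
      set Q := ∫ t in ((i : ℝ) / n)..(((i : ℝ) + 1) / n), φ t ^ 2
      rw [setLIntegral_congr Ioo_ae_eq_Ico.symm]
      calc _ ≤ ∫⁻ x in Set.Ioo ((i : ℝ) / n) (((i : ℝ) + 1) / n),
            ENNReal.ofReal (c ^ 2 * (1 / n * Q)) := by
            refine setLIntegral_mono measurable_const fun x hx => ENNReal.ofReal_le_ofReal ?_
            have := h i (Finset.mem_range.1 hi) x hx
            calc g x ^ 2 = |g x| ^ 2 := (sq_abs _).symm
              _ ≤ (c * J) ^ 2 := by gcongr
              _ = c ^ 2 * J ^ 2 := by ring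
              _ ≤ _ := by gcongr
        _ = _ := by
            rw [setLIntegral_const, Real.volume_Ioo, hlen, mul_comm,
              ← ENNReal.ofReal_mul (by positivity)]
            congr 1; ring
    have h_lintegral : ∫⁻ x, ENNReal.ofReal (φ x ^ 2) ∂unitMeasure
        = ENNReal.ofReal (∫ t in (0 : ℝ)..1, φ t ^ 2) := by
      rw [intervalIntegral.integral_of_le zero_le_one, integral_Ioc_eq_integral_Ioo,
        ofReal_integral_eq_lintegral_ofReal]
      · exact ((by fun_prop : Continuous fun t => φ t ^ 2).integrableOn_Icc).mono_set
          Set.Ioo_subset_Icc_self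
      · exact Filter.Eventually.of_forall fun t => sq_nonneg _
    have hsum : ∑ i ∈ range n, ∫ t in ((i : ℝ) / n)..(((i : ℝ) + 1) / n), φ t ^ 2
        = ∫ t in (0 : ℝ)..1, φ t ^ 2 := by
      have := intervalIntegral.sum_integral_adjacent_intervals (μ := volume)
        (f := fun t => φ t ^ 2) (a := fun i : ℕ => (i : ℝ) / n) (n := n)
        (fun i _ => Continuous.intervalIntegrable (by fun_prop) _ _)
      simp only [Nat.cast_add, Nat.cast_one, Nat.cast_zero, zero_div, div_self hn'.ne'] at this
      exact this
    calc _ ≤ ∫⁻ x in ⋃ i ∈ range n, Set.Ico ((i : ℝ) / n) (((i : ℝ) + 1) / n),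
          ENNReal.ofReal (g x ^ 2) := lintegral_mono_set hcover
      _ ≤ ∑ i ∈ range n, ∫⁻ x in Set.Ico ((i : ℝ) / n) (((i : ℝ) + 1) / n),
          ENNReal.ofReal (g x ^ 2) := lintegral_biUnion_finset_le _ _ _
      _ ≤ ∑ i ∈ range n, ENNReal.ofReal ((c * (1 / n)) ^ 2 *
          ∫ t in ((i : ℝ) / n)..(((i : ℝ) + 1) / n), φ t ^ 2) := Finset.sum_le_sum hcell
      _ = _ := by
          rw [← ENNReal.ofReal_sum_of_nonneg, ← Finset.mul_sum, hsum, h_lintegral,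
            ENNReal.ofReal_mul (by positivity), ENNReal.ofReal_pow (by positivity)]
          intro i _
          have := intervalIntegral.integral_nonneg (μ := volume) (cell_lt hn i).le
            fun t (_ : t ∈ Set.Icc ((i : ℝ) / n) (((i : ℝ) + 1) / n)) => sq_nonneg (φ t)
          positivity
  rw [← eLpNorm_two_sq, ← eLpNorm_two_sq, ← mul_pow] at key
  exact (ENNReal.pow_le_pow_left_iff two_ne_zero).1 key

theorem eLpNorm_linErr_le {n : ℕ} (hn : 0 < n) {f f' : ℝ → ℝ}
    (hf : ∀ x, HasDerivAt f (f' x) x) (hc : Continuous f') :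
    eLpNorm (linErr n f) 2 unitMeasure ≤ ENNReal.ofReal (1 / n) * eLpNorm f' 2 unitMeasure := by
  simpa using eLpNorm_le_of_cell_bound hn (g := linErr n f) hc zero_le_one fun i hi x hx =>
    (abs_linErr_le hn hi hf hc hx).trans_eq (one_mul _).symm

theorem eLpNorm_linErr_le_second {n : ℕ} (hn : 0 < n) {f f' f'' : ℝ → ℝ}
    (hf : ∀ x, HasDerivAt f (f' x) x) (hf' : ∀ x, HasDerivAt f' (f'' x) x)
    (hc : Continuous f'') :
    eLpNorm (linErr n f) 2 unitMeasure
      ≤ ENNReal.ofReal ((1 / n) ^ 2) * eLpNorm f'' 2 unitMeasure := by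
  rw [sq]
  exact eLpNorm_le_of_cell_bound hn hc (by positivity) fun i hi x hx =>
    abs_linErr_le_second hn hi hf hf' hc hx

theorem eLpNorm_deriv_linErr_le {n : ℕ} (hn : 0 < n) {f f' f'' : ℝ → ℝ}
    (hf : ∀ x, HasDerivAt f (f' x) x) (hf' : ∀ x, HasDerivAt f' (f'' x) x)
    (hc : Continuous f'') :
    eLpNorm (deriv (linErr n f)) 2 unitMeasure
      ≤ ENNReal.ofReal (1 / n) * eLpNorm f'' 2 unitMeasure := by
  have := eLpNorm_le_of_cell_bound hn (g := deriv (linErr n f)) hc zero_le_one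
    fun i hi x hx => by
      rw [(linErr_hasDerivAt hn hi (hf x) hx).deriv, one_mul]
      exact abs_deriv_sub_slope_le i hn hf hf' hc (Set.Ioo_subset_Icc_self hx)
  simpa using this

theorem exists_mem_cell {n : ℕ} (hn : 0 < n) {x : ℝ} (hx : x ∈ Set.Ioo (0 : ℝ) 1)
    (hirr : Irrational x) : ∃ i < n, x ∈ Set.Ioo ((i : ℝ) / n) (((i : ℝ) + 1) / n) := by
  have hn' : (0 : ℝ) < n := by exact_mod_cast hn
  have hfl : 0 ≤ (n : ℝ) * x := by have := hx.1; positivity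
  refine ⟨⌊(n : ℝ) * x⌋₊, ?_, lt_of_le_of_ne ?_ ?_, ?_⟩
  · rw [Nat.floor_lt hfl]; nlinarith [hx.2]
  · rw [div_le_iff₀ hn', mul_comm x]; exact Nat.floor_le hfl
  · intro h
    exact hirr ⟨(⌊(n : ℝ) * x⌋₊ : ℚ) / n, by push_cast; exact h⟩
  · rw [lt_div_iff₀ hn', mul_comm x]; exact Nat.lt_floor_add_one _

theorem linErr_differentiableAt {n : ℕ} (hn : 0 < n) {f : ℝ → ℝ} {x : ℝ}
    (hf : DifferentiableAt ℝ f x) (hx : x ∈ Set.Ioo (0 : ℝ) 1) (hirr : Irrational x) :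
    DifferentiableAt ℝ (linErr n f) x := by
  obtain ⟨i, hi, hxi⟩ := exists_mem_cell hn hx hirr
  exact (linErr_hasDerivAt hn hi hf.hasDerivAt hxi).differentiableAt

theorem pderivX_eq_fderiv {v : ℝ × ℝ → ℝ} (hv : Differentiable ℝ v) :
    pderivX v = fun p => fderiv ℝ v p (1, 0) := by
  funext ⟨x, y⟩
  exact ((hv (x, y)).hasFDerivAt.comp_hasDerivAt x
    ((hasDerivAt_id x).prodMk (hasDerivAt_const x y))).deriv

theorem pderivY_eq_fderiv {v : ℝ × ℝ → ℝ} (hv : Differentiable ℝ v) :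
    pderivY v = fun p => fderiv ℝ v p (0, 1) := by
  funext ⟨x, y⟩
  exact ((hv (x, y)).hasFDerivAt.comp_hasDerivAt y
    ((hasDerivAt_const y x).prodMk (hasDerivAt_id y))).deriv

theorem hasDerivAt_pderivX {v : ℝ × ℝ → ℝ} (hv : Differentiable ℝ v) (x y : ℝ) :
    HasDerivAt (fun x => v (x, y)) (pderivX v (x, y)) x :=
  DifferentiableAt.hasDerivAt (by fun_prop)

theorem hasDerivAt_pderivY {v : ℝ × ℝ → ℝ} (hv : Differentiable ℝ v) (x y : ℝ) :
    HasDerivAt (fun y => v (x, y)) (pderivY v (x, y)) y :=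
  DifferentiableAt.hasDerivAt (by fun_prop)

theorem contDiff_pderivX {v : ℝ × ℝ → ℝ} {n : ℕ} (hv : ContDiff ℝ (n + 1 : ℕ) v) :
    ContDiff ℝ n (pderivX v) := by
  rw [pderivX_eq_fderiv (hv.differentiable (by simp))]
  exact (hv.fderiv_right (by simp)).clm_apply contDiff_const

theorem contDiff_pderivY {v : ℝ × ℝ → ℝ} {n : ℕ} (hv : ContDiff ℝ (n + 1 : ℕ) v) :
    ContDiff ℝ n (pderivY v) := by
  rw [pderivY_eq_fderiv (hv.differentiable (by simp))]
  exact (hv.fderiv_right (by simp)).clm_apply contDiff_const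

theorem pderivY_pderivX_comm {v : ℝ × ℝ → ℝ} {n : ℕ} (hv : ContDiff ℝ (n + 2 : ℕ) v) :
    pderivY (pderivX v) = pderivX (pderivY v) := by
  have hX := contDiff_pderivX (n := n + 1) hv
  have hY := contDiff_pderivY (n := n + 1) hv
  have hd : Differentiable ℝ v := hv.differentiable (by simp)
  have hd2 : Differentiable ℝ (fderiv ℝ v) :=
    (hv.fderiv_right (m := (n + 1 : ℕ))
      (by simp [add_assoc, one_add_one_eq_two])).differentiable (by simp)
  rw [pderivY_eq_fderiv (hX.differentiable (by simp)),
    pderivX_eq_fderiv (hY.differentiable (by simp)), pderivX_eq_fderiv hd, pderivY_eq_fderiv hd]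
  funext p
  have hs : IsSymmSndFDerivAt ℝ v p := by
    refine hv.contDiffAt.isSymmSndFDerivAt ?_
    simp
  have e : ∀ c : ℝ × ℝ, fderiv ℝ (fun q => fderiv ℝ v q c) p
      = (fderiv ℝ (fderiv ℝ v) p).flip c := by
    intro c
    rw [fderiv_clm_apply (hd2 p) (differentiableAt_const c)]
    simp
  rw [e, e]
  simpa using hs.eq (0, 1) (1, 0)

theorem pderiv_xxyy_comm {u : ℝ × ℝ → ℝ} (hu : ContDiff ℝ 4 u) :
    pderivY (pderivY (pderivX (pderivX u))) = uxxyy u := by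
  have h4 : ContDiff ℝ (4 : ℕ) u := hu
  have hX := contDiff_pderivX (n := 3) h4
  have hY := contDiff_pderivY (n := 3) h4
  have hXY := contDiff_pderivX (n := 2) hY
  rw [uxxyy, pderivY_pderivX_comm (n := 1) hX, pderivY_pderivX_comm (n := 2) h4,
    pderivY_pderivX_comm (n := 0) hXY, pderivY_pderivX_comm (n := 1) hY]

/-- The error of piecewise linear interpolation in the first variable. -/
def errX (n : ℕ) (v : ℝ × ℝ → ℝ) (p : ℝ × ℝ) : ℝ := linErr n (fun t => v (t, p.2)) p.1

/-- The error of piecewise linear interpolation in the second variable. -/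
def errY (n : ℕ) (v : ℝ × ℝ → ℝ) (p : ℝ × ℝ) : ℝ := linErr n (fun t => v (p.1, t)) p.2

theorem continuous_errX {n : ℕ} (hn : 0 < n) {v : ℝ × ℝ → ℝ} (hv : Continuous v) :
    Continuous (errX n v) := by
  have := continuous_hat hn
  unfold errX linErr linInterp
  fun_prop

theorem continuous_errY {n : ℕ} (hn : 0 < n) {v : ℝ × ℝ → ℝ} (hv : Continuous v) :
    Continuous (errY n v) := by
  have := continuous_hat hn
  unfold errY linErr linInterp
  fun_prop

theorem hasDerivAt_errY {n : ℕ} {v : ℝ × ℝ → ℝ} (hv : Differentiable ℝ v) (x y : ℝ) :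
    HasDerivAt (fun x => errY n v (x, y)) (errY n (pderivX v) (x, y)) x := by
  unfold errY linErr linInterp
  exact (hasDerivAt_pderivX hv x y).sub
    (HasDerivAt.fun_sum fun i _ => (hasDerivAt_pderivX hv x (i / n)).mul_const (hat n i y))

theorem hasDerivAt_errX {n : ℕ} {v : ℝ × ℝ → ℝ} (hv : Differentiable ℝ v) (x y : ℝ) :
    HasDerivAt (fun y => errX n v (x, y)) (errX n (pderivY v) (x, y)) y := by
  unfold errX linErr linInterp
  exact (hasDerivAt_pderivY hv x y).sub
    (HasDerivAt.fun_sum fun i _ => (hasDerivAt_pderivY hv (i / n) y).mul_const (hat n i x))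

theorem errX_errY_comm (a b : ℕ) (v : ℝ × ℝ → ℝ) :
    errX a (errY b v) = errY b (errX a v) := by
  funext p
  simp only [errX, errY, linErr, linInterp, sub_mul, Finset.sum_sub_distrib, Finset.sum_mul]
  rw [Finset.sum_comm]
  simp only [mul_right_comm]
  ring

/-- Lebesgue measure on the open unit square. -/
abbrev squareMeasure : Measure (ℝ × ℝ) := volume.restrict Omega2

theorem squareMeasure_eq_prod : squareMeasure = unitMeasure.prod unitMeasure := by
  rw [Measure.prod_restrict, ← Measure.volume_eq_prod]; rfl

theorem eLpNorm_le_of_slices_fst {F G : ℝ × ℝ → ℝ} (hF : Measurable F) (hG : Measurable G)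
    {c : ENNReal} (h : ∀ y, eLpNorm (fun x => F (x, y)) 2 unitMeasure
      ≤ c * eLpNorm (fun x => G (x, y)) 2 unitMeasure) :
    eLpNorm F 2 squareMeasure ≤ c * eLpNorm G 2 squareMeasure := by
  refine (ENNReal.pow_le_pow_left_iff two_ne_zero).1 ?_
  rw [mul_pow, eLpNorm_two_sq, eLpNorm_two_sq, squareMeasure_eq_prod,
    lintegral_prod_symm _ (by fun_prop), lintegral_prod_symm _ (by fun_prop),
    ← lintegral_const_mul _ (by fun_prop)]
  refine lintegral_mono fun y => ?_
  have := pow_le_pow_left' (h y) 2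
  rwa [mul_pow, eLpNorm_two_sq, eLpNorm_two_sq] at this

theorem eLpNorm_le_of_slices_snd {F G : ℝ × ℝ → ℝ} (hF : Measurable F) (hG : Measurable G)
    {c : ENNReal} (h : ∀ x, eLpNorm (fun y => F (x, y)) 2 unitMeasure
      ≤ c * eLpNorm (fun y => G (x, y)) 2 unitMeasure) :
    eLpNorm F 2 squareMeasure ≤ c * eLpNorm G 2 squareMeasure := by
  refine (ENNReal.pow_le_pow_left_iff two_ne_zero).1 ?_
  rw [mul_pow, eLpNorm_two_sq, eLpNorm_two_sq, squareMeasure_eq_prod,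
    lintegral_prod _ (by fun_prop), lintegral_prod _ (by fun_prop),
    ← lintegral_const_mul _ (by fun_prop)]
  refine lintegral_mono fun y => ?_
  have := pow_le_pow_left' (h y) 2
  rwa [mul_pow, eLpNorm_two_sq, eLpNorm_two_sq] at this

theorem measurable_pderivX {v : ℝ × ℝ → ℝ} (hv : Continuous v) : Measurable (pderivX v) :=
  (measurable_deriv_with_param (f := fun y x => v (x, y))
    (hv.comp continuous_swap)).comp measurable_swap

theorem measurable_pderivY {v : ℝ × ℝ → ℝ} (hv : Continuous v) : Measurable (pderivY v) :=
  measurable_deriv_with_param (f := fun x y => v (x, y)) hv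

section DirectionalBounds

variable {n : ℕ} {v v' v'' : ℝ × ℝ → ℝ}

theorem eLpNorm_errX_le (hn : 0 < n) (hc : Continuous v) (hc' : Continuous v')
    (h : ∀ x y, HasDerivAt (fun x => v (x, y)) (v' (x, y)) x) :
    eLpNorm (errX n v) 2 squareMeasure
      ≤ ENNReal.ofReal (1 / n) * eLpNorm v' 2 squareMeasure :=
  eLpNorm_le_of_slices_fst (continuous_errX hn hc).measurable hc'.measurable fun y =>
    eLpNorm_linErr_le hn (fun x => h x y) (by fun_prop)

theorem eLpNorm_errX_le_second (hn : 0 < n) (hc : Continuous v) (hc'' : Continuous v'')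
    (h : ∀ x y, HasDerivAt (fun x => v (x, y)) (v' (x, y)) x)
    (h' : ∀ x y, HasDerivAt (fun x => v' (x, y)) (v'' (x, y)) x) :
    eLpNorm (errX n v) 2 squareMeasure
      ≤ ENNReal.ofReal ((1 / n) ^ 2) * eLpNorm v'' 2 squareMeasure :=
  eLpNorm_le_of_slices_fst (continuous_errX hn hc).measurable hc''.measurable fun y =>
    eLpNorm_linErr_le_second hn (fun x => h x y) (fun x => h' x y)
      (by fun_prop)

theorem eLpNorm_pderivX_errX_le (hn : 0 < n) (hc : Continuous v) (hc'' : Continuous v'')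
    (h : ∀ x y, HasDerivAt (fun x => v (x, y)) (v' (x, y)) x)
    (h' : ∀ x y, HasDerivAt (fun x => v' (x, y)) (v'' (x, y)) x) :
    eLpNorm (pderivX (errX n v)) 2 squareMeasure
      ≤ ENNReal.ofReal (1 / n) * eLpNorm v'' 2 squareMeasure :=
  eLpNorm_le_of_slices_fst (measurable_pderivX (continuous_errX hn hc)) hc''.measurable fun y =>
    eLpNorm_deriv_linErr_le (f := fun x => v (x, y)) hn (fun x => h x y) (fun x => h' x y)
      (by fun_prop)

theorem eLpNorm_errY_le_second (hn : 0 < n) (hc : Continuous v) (hc'' : Continuous v'')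
    (h : ∀ x y, HasDerivAt (fun y => v (x, y)) (v' (x, y)) y)
    (h' : ∀ x y, HasDerivAt (fun y => v' (x, y)) (v'' (x, y)) y) :
    eLpNorm (errY n v) 2 squareMeasure
      ≤ ENNReal.ofReal ((1 / n) ^ 2) * eLpNorm v'' 2 squareMeasure :=
  eLpNorm_le_of_slices_snd (continuous_errY hn hc).measurable hc''.measurable fun x =>
    eLpNorm_linErr_le_second hn (h x) (h' x) (by fun_prop)

theorem eLpNorm_pderivY_errY_le (hn : 0 < n) (hc : Continuous v) (hc'' : Continuous v'')
    (h : ∀ x y, HasDerivAt (fun y => v (x, y)) (v' (x, y)) y)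
    (h' : ∀ x y, HasDerivAt (fun y => v' (x, y)) (v'' (x, y)) y) :
    eLpNorm (pderivY (errY n v)) 2 squareMeasure
      ≤ ENNReal.ofReal (1 / n) * eLpNorm v'' 2 squareMeasure :=
  eLpNorm_le_of_slices_snd (measurable_pderivY (continuous_errY hn hc)) hc''.measurable fun x =>
    eLpNorm_deriv_linErr_le (f := fun y => v (x, y)) hn (h x) (h' x) (by fun_prop)

end DirectionalBounds

section MixedBounds

variable {a b : ℕ} {u : ℝ × ℝ → ℝ}

theorem eLpNorm_errY_pderivXX_le (hb : 0 < b) (hu : ContDiff ℝ 4 u) :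
    eLpNorm (errY b (pderivX (pderivX u))) 2 squareMeasure
      ≤ ENNReal.ofReal ((1 / b) ^ 2) * eLpNorm (uxxyy u) 2 squareMeasure := by
  have hXX := contDiff_pderivX (n := 2) (contDiff_pderivX (n := 3) hu)
  have hXXY := contDiff_pderivY (n := 1) hXX
  rw [← pderiv_xxyy_comm hu]
  exact eLpNorm_errY_le_second hb hXX.continuous (contDiff_pderivY (n := 0) hXXY).continuous
    (hasDerivAt_pderivY (hXX.differentiable (by simp)))
    (hasDerivAt_pderivY (hXXY.differentiable (by simp)))

theorem eLpNorm_errX_pderivYY_le (ha : 0 < a) (hu : ContDiff ℝ 4 u) :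
    eLpNorm (errX a (pderivY (pderivY u))) 2 squareMeasure
      ≤ ENNReal.ofReal ((1 / a) ^ 2) * eLpNorm (uxxyy u) 2 squareMeasure := by
  have hYY := contDiff_pderivY (n := 2) (contDiff_pderivY (n := 3) hu)
  have hYYX := contDiff_pderivX (n := 1) hYY
  exact eLpNorm_errX_le_second ha hYY.continuous (contDiff_pderivX (n := 0) hYYX).continuous
    (hasDerivAt_pderivX (hYY.differentiable (by simp)))
    (hasDerivAt_pderivX (hYYX.differentiable (by simp)))

theorem eLpNorm_pderivX_errX_errY_le (ha : 0 < a) (hb : 0 < b) (hu : ContDiff ℝ 4 u) :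
    eLpNorm (pderivX (errX a (errY b u))) 2 squareMeasure
      ≤ ENNReal.ofReal (1 / a * (1 / b) ^ 2) * eLpNorm (uxxyy u) 2 squareMeasure := by
  have hX := contDiff_pderivX (n := 3) hu
  have hXX := contDiff_pderivX (n := 2) hX
  rw [ENNReal.ofReal_mul (by positivity), mul_assoc]
  refine (eLpNorm_pderivX_errX_le ha (continuous_errY hb hu.continuous)
    (continuous_errY hb hXX.continuous) (hasDerivAt_errY (hu.differentiable (by simp)))
    (hasDerivAt_errY (hX.differentiable (by simp)))).trans ?_
  gcongr
  exact eLpNorm_errY_pderivXX_le hb hu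

theorem eLpNorm_pderivY_errX_errY_le (ha : 0 < a) (hb : 0 < b) (hu : ContDiff ℝ 4 u) :
    eLpNorm (pderivY (errX a (errY b u))) 2 squareMeasure
      ≤ ENNReal.ofReal (1 / b * (1 / a) ^ 2) * eLpNorm (uxxyy u) 2 squareMeasure := by
  have hY := contDiff_pderivY (n := 3) hu
  have hYY := contDiff_pderivY (n := 2) hY
  rw [ENNReal.ofReal_mul (by positivity), mul_assoc, errX_errY_comm]
  refine (eLpNorm_pderivY_errY_le hb (continuous_errX ha hu.continuous)
    (continuous_errX ha hYY.continuous) (hasDerivAt_errX (hu.differentiable (by simp)))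
    (hasDerivAt_errX (hY.differentiable (by simp)))).trans ?_
  gcongr
  exact eLpNorm_errX_pderivYY_le ha hu

theorem eLpNorm_errX_errY_le (ha : 0 < a) (hb : 0 < b) (hu : ContDiff ℝ 4 u) :
    eLpNorm (errX a (errY b u)) 2 squareMeasure
      ≤ ENNReal.ofReal ((1 / a) ^ 2 * (1 / b) ^ 2) * eLpNorm (uxxyy u) 2 squareMeasure := by
  have hX := contDiff_pderivX (n := 3) hu
  have hXX := contDiff_pderivX (n := 2) hX
  rw [ENNReal.ofReal_mul (by positivity), mul_assoc]
  refine (eLpNorm_errX_le_second ha (continuous_errY hb hu.continuous)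
    (continuous_errY hb hXX.continuous) (hasDerivAt_errY (hu.differentiable (by simp)))
    (hasDerivAt_errY (hX.differentiable (by simp)))).trans ?_
  gcongr
  exact eLpNorm_errY_pderivXX_le hb hu

end MixedBounds

theorem interp_eq_linInterp (a b : ℕ) (u : ℝ × ℝ → ℝ) (p : ℝ × ℝ) :
    interp a b u p = linInterp a (fun s => linInterp b (fun t => u (s, t)) p.2) p.1 := by
  simp only [interp, linInterp, Finset.sum_mul, mul_right_comm]

theorem linInterp_sub (n : ℕ) (f g : ℝ → ℝ) (x : ℝ) :
    linInterp n (fun s => f s - g s) x = linInterp n f x - linInterp n g x := by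
  simp only [linInterp, sub_mul, Finset.sum_sub_distrib]

theorem linInterp_one_of_zero {f : ℝ → ℝ} (h0 : f 0 = 0) (h1 : f 1 = 0) (x : ℝ) :
    linInterp 1 f x = 0 := by
  simp [linInterp, Finset.sum_range_succ, h0, h1]

theorem interp_one_of_vanish {u : ℝ × ℝ → ℝ} (hu : VanishOnBoundary u) {b : ℕ} (hb : 0 < b)
    (p : ℝ × ℝ) : interp 1 b u p = 0 := by
  have hb' : (0 : ℝ) < b := by exact_mod_cast hb
  have key : ∀ j ∈ range (b + 1), (j : ℝ) / b ∈ Set.Icc (0 : ℝ) 1 := fun j hj => by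
    have : (j : ℝ) ≤ b := by exact_mod_cast Nat.lt_succ_iff.1 (Finset.mem_range.1 hj)
    exact ⟨by positivity, (div_le_one hb').2 this⟩
  rw [interp_eq_linInterp]
  refine linInterp_one_of_zero ?_ ?_ _ <;> refine Finset.sum_eq_zero fun j hj => ?_
  · exact mul_eq_zero_of_left
      (hu (0, (j : ℝ) / b) ⟨⟨le_rfl, zero_le_one⟩, key j hj⟩ (Or.inl rfl)) _
  · exact mul_eq_zero_of_left
      (hu (1, (j : ℝ) / b) ⟨⟨zero_le_one, le_rfl⟩, key j hj⟩ (Or.inr (Or.inl rfl))) _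

theorem msInterp_eq_sum {u : ℝ × ℝ → ℝ} (hu : VanishOnBoundary u) {m : ℕ} (hm : 1 ≤ m)
    (p : ℝ × ℝ) : msInterp (2 ^ m) (m - 1) u p
      = ∑ a ∈ range m, (interp (2 ^ (a + 1)) (2 ^ (m - a)) u p
        - interp (2 ^ a) (2 ^ (m - a)) u p) := by
  obtain ⟨k, rfl⟩ : ∃ k, m = k + 1 := ⟨m - 1, by omega⟩
  have hdiv : ∀ i ≤ k + 1, 2 ^ (k + 1) / 2 ^ i = 2 ^ (k + 1 - i) := fun i hi =>
    Nat.pow_div hi two_pos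
  rw [Finset.sum_sub_distrib, msInterp, Nat.add_sub_cancel]
  congr 1
  · rw [← Finset.sum_range_reflect]
    refine Finset.sum_congr rfl fun i hi => ?_
    have := Finset.mem_range.1 hi
    rw [hdiv _ (by omega), hdiv _ (by omega)]
    congr 2 <;> congr 1 <;> omega
  · rw [Finset.sum_range_succ', pow_zero, interp_one_of_vanish hu (by positivity), add_zero,
      ← Finset.sum_range_reflect, ← Finset.Ico_add_one_right_eq_Icc, Finset.sum_Ico_eq_sum_range,
      Nat.add_sub_cancel]
    refine Finset.sum_congr rfl fun i hi => ?_
    have := Finset.mem_range.1 hi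
    rw [hdiv _ (by omega), hdiv _ (by omega)]
    congr 2 <;> congr 1 <;> omega

theorem sub_msInterp_eq {u : ℝ × ℝ → ℝ} (hu : VanishOnBoundary u) {m : ℕ} (hm : 1 ≤ m)
    {p : ℝ × ℝ} (hp : p ∈ Omega2) : u p - msInterp (2 ^ m) (m - 1) u p
      = errX (2 ^ m) u p + ∑ a ∈ range m, (errX (2 ^ a) (errY (2 ^ (m - a)) u) p
        - errX (2 ^ (a + 1)) (errY (2 ^ (m - a)) u) p) := by
  set A : ℕ → ℝ := fun a => linInterp (2 ^ a) (fun s => u (s, p.2)) p.1 with hA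
  have hy : p.2 ∈ Set.Icc (0 : ℝ) 1 := Set.Ioo_subset_Icc_self hp.2
  have hA0 : A 0 = 0 := linInterp_one_of_zero
    (hu (0, p.2) ⟨⟨le_rfl, zero_le_one⟩, hy⟩ (Or.inl rfl))
    (hu (1, p.2) ⟨⟨zero_le_one, le_rfl⟩, hy⟩ (Or.inr (Or.inl rfl))) _
  have hlin : ∀ a b : ℕ, errX (2 ^ a) (errY b u) p
      = errY b u p - (A a - interp (2 ^ a) b u p) := by
    intro a b
    rw [interp_eq_linInterp, hA, ← linInterp_sub]
    rfl
  have hsum : ∑ a ∈ range m, (errX (2 ^ a) (errY (2 ^ (m - a)) u) p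
        - errX (2 ^ (a + 1)) (errY (2 ^ (m - a)) u) p)
      = ∑ a ∈ range m, (A (a + 1) - A a)
        - ∑ a ∈ range m, (interp (2 ^ (a + 1)) (2 ^ (m - a)) u p
          - interp (2 ^ a) (2 ^ (m - a)) u p) := by
    rw [← Finset.sum_sub_distrib]
    refine Finset.sum_congr rfl fun a _ => ?_
    rw [hlin, hlin]; ring
  rw [hsum, Finset.sum_range_sub, hA0, msInterp_eq_sum hu hm,
    show errX (2 ^ m) u p = u p - A m from rfl]
  ring

theorem isOpen_Omega2 : IsOpen Omega2 := isOpen_Ioo.prod isOpen_Ioo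

theorem eventually_mk_fst_mem {s : Set (ℝ × ℝ)} (hs : IsOpen s) {p : ℝ × ℝ} (hp : p ∈ s) :
    ∀ᶠ x in nhds p.1, (x, p.2) ∈ s :=
  (by fun_prop : Continuous fun x : ℝ => (x, p.2)).continuousAt.eventually_mem (hs.mem_nhds hp)

theorem eventually_mk_snd_mem {s : Set (ℝ × ℝ)} (hs : IsOpen s) {p : ℝ × ℝ} (hp : p ∈ s) :
    ∀ᶠ y in nhds p.2, (p.1, y) ∈ s :=
  (by fun_prop : Continuous fun y : ℝ => (p.1, y)).continuousAt.eventually_mem (hs.mem_nhds hp)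

theorem pderivX_eqOn {s : Set (ℝ × ℝ)} (hs : IsOpen s) {v w : ℝ × ℝ → ℝ} (h : Set.EqOn v w s) :
    Set.EqOn (pderivX v) (pderivX w) s := fun _ hp =>
  Filter.EventuallyEq.deriv_eq ((eventually_mk_fst_mem hs hp).mono fun _ hx => h hx)

theorem pderivY_eqOn {s : Set (ℝ × ℝ)} (hs : IsOpen s) {v w : ℝ × ℝ → ℝ} (h : Set.EqOn v w s) :
    Set.EqOn (pderivY v) (pderivY w) s := fun _ hp =>
  Filter.EventuallyEq.deriv_eq ((eventually_mk_snd_mem hs hp).mono fun _ hx => h hx)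

theorem ae_irrational : ∀ᵐ p ∂squareMeasure, p ∈ Omega2 ∧ Irrational p.1 ∧ Irrational p.2 := by
  have h : ∀ᵐ x : ℝ, Irrational x := (Set.countable_range ((↑) : ℚ → ℝ)).ae_notMem volume
  have h1 : ∀ᵐ p : ℝ × ℝ, Irrational p.1 := Measure.quasiMeasurePreserving_fst.ae h
  have h2 : ∀ᵐ p : ℝ × ℝ, Irrational p.2 := Measure.quasiMeasurePreserving_snd.ae h
  filter_upwards [ae_restrict_of_ae h1, ae_restrict_of_ae h2,
    ae_restrict_mem isOpen_Omega2.measurableSet] with p a b c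
  exact ⟨c, a, b⟩

theorem pderivX_error_ae {u : ℝ × ℝ → ℝ} (hu : VanishOnBoundary u) (hd : ContDiff ℝ 4 u) {m : ℕ}
    (hm : 1 ≤ m) : pderivX (fun p => u p - msInterp (2 ^ m) (m - 1) u p) =ᵐ[squareMeasure]
      pderivX (errX (2 ^ m) u) + ∑ a ∈ range m, (pderivX (errX (2 ^ a) (errY (2 ^ (m - a)) u))
        - pderivX (errX (2 ^ (a + 1)) (errY (2 ^ (m - a)) u))) := by
  filter_upwards [ae_irrational] with p ⟨hp, hx, _⟩
  rw [pderivX_eqOn isOpen_Omega2 (fun q hq => sub_msInterp_eq hu hm hq) hp]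
  have hD : Differentiable ℝ u := hd.differentiable (by simp)
  have h1 : ∀ n : ℕ, 0 < n → HasDerivAt (fun x => errX n u (x, p.2)) (pderivX (errX n u) p) p.1 :=
    fun n hn => (linErr_differentiableAt hn (hasDerivAt_pderivX hD _ _).differentiableAt
      hp.1 hx).hasDerivAt
  have h2 : ∀ n b : ℕ, 0 < n → HasDerivAt (fun x => errX n (errY b u) (x, p.2))
      (pderivX (errX n (errY b u)) p) p.1 :=
    fun n b hn => (linErr_differentiableAt hn (hasDerivAt_errY hD _ _).differentiableAt
      hp.1 hx).hasDerivAt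
  simp only [Pi.add_apply, Finset.sum_apply, Pi.sub_apply]
  exact ((h1 _ (by positivity)).add (HasDerivAt.fun_sum fun a _ =>
    (h2 _ _ (by positivity)).sub (h2 _ _ (by positivity)))).deriv

theorem pderivY_error_ae {u : ℝ × ℝ → ℝ} (hu : VanishOnBoundary u) (hd : ContDiff ℝ 4 u) {m : ℕ}
    (hm : 1 ≤ m) : pderivY (fun p => u p - msInterp (2 ^ m) (m - 1) u p) =ᵐ[squareMeasure]
      pderivY (errX (2 ^ m) u) + ∑ a ∈ range m, (pderivY (errX (2 ^ a) (errY (2 ^ (m - a)) u))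
        - pderivY (errX (2 ^ (a + 1)) (errY (2 ^ (m - a)) u))) := by
  filter_upwards [ae_irrational] with p ⟨hp, _, hy⟩
  rw [pderivY_eqOn isOpen_Omega2 (fun q hq => sub_msInterp_eq hu hm hq) hp]
  have hD : Differentiable ℝ u := hd.differentiable (by simp)
  have h1 : ∀ n : ℕ, HasDerivAt (fun y => errX n u (p.1, y)) (pderivY (errX n u) p) p.2 :=
    fun n => (hasDerivAt_errX hD _ _).differentiableAt.hasDerivAt
  have h2 : ∀ n b : ℕ, 0 < b → HasDerivAt (fun y => errX n (errY b u) (p.1, y))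
      (pderivY (errX n (errY b u)) p) p.2 := by
    intro n b hb
    rw [errX_errY_comm]
    exact (linErr_differentiableAt hb (hasDerivAt_errX hD _ _).differentiableAt
      hp.2 hy).hasDerivAt
  simp only [Pi.add_apply, Finset.sum_apply, Pi.sub_apply]
  exact ((h1 _).add (HasDerivAt.fun_sum fun a _ =>
    (h2 _ _ (by positivity)).sub (h2 _ _ (by positivity)))).deriv

theorem eLpNorm_telescope_le {α : Type*} [MeasurableSpace α] {μ : Measure α} {f D : α → ℝ}
    {F G : ℕ → α → ℝ} {m : ℕ} (hf : f =ᵐ[μ] D + ∑ a ∈ range m, (F a - G a))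
    (hD : Measurable D) (hF : ∀ a, Measurable (F a)) (hG : ∀ a, Measurable (G a))
    {K M : ENNReal} {r : ℕ → ℝ} {C : ℝ} (hr : ∀ a < m, 0 ≤ r a) (hC : ∑ a ∈ range m, r a ≤ C)
    (hDK : eLpNorm D 2 μ ≤ K)
    (hFM : ∀ a < m, eLpNorm (F a) 2 μ ≤ ENNReal.ofReal (r a) * M)
    (hGM : ∀ a < m, eLpNorm (G a) 2 μ ≤ ENNReal.ofReal (r a) * M) :
    eLpNorm f 2 μ ≤ K + ENNReal.ofReal (2 * C) * M := by
  rw [eLpNorm_congr_ae hf]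
  have hFG : ∀ a, Measurable (F a - G a) := fun a => (hF a).sub (hG a)
  refine (eLpNorm_add_le hD.aestronglyMeasurable (Finset.aestronglyMeasurable_sum _
    fun a _ => (hFG a).aestronglyMeasurable) one_le_two).trans (add_le_add hDK ?_)
  refine (eLpNorm_sum_le (fun a _ => (hFG a).aestronglyMeasurable) one_le_two).trans ?_
  calc _ ≤ ∑ a ∈ range m, ENNReal.ofReal (2 * r a) * M := by
        refine Finset.sum_le_sum fun a ha => ?_
        have ha' := Finset.mem_range.1 ha
        refine (eLpNorm_sub_le (hF a).aestronglyMeasurable (hG a).aestronglyMeasurable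
          one_le_two).trans ((add_le_add (hFM a ha') (hGM a ha')).trans_eq ?_)
        rw [ENNReal.ofReal_mul zero_le_two, ENNReal.ofReal_ofNat, two_mul, add_mul]
    _ = ENNReal.ofReal (2 * ∑ a ∈ range m, r a) * M := by
        rw [← Finset.sum_mul, ← ENNReal.ofReal_sum_of_nonneg, Finset.mul_sum]
        intro a ha
        have := hr a (Finset.mem_range.1 ha)
        positivity
    _ ≤ _ := by gcongr

theorem sum_inv_two_pow_le (m : ℕ) : ∑ a ∈ range m, ((1 : ℝ) / 2 ^ a) ≤ 2 := by
  have := sum_geometric_two_le m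
  simpa [div_pow] using this

theorem sum_inv_two_pow_reflect_le (m : ℕ) : ∑ a ∈ range m, ((1 : ℝ) / 2 ^ (m - a)) ≤ 2 := by
  rw [← Finset.sum_range_reflect]
  refine le_trans (Finset.sum_le_sum fun a ha => ?_) (sum_inv_two_pow_le m)
  have := Finset.mem_range.1 ha
  gcongr
  · norm_num
  · omega

theorem ofReal_L2norm {v : ℝ × ℝ → ℝ} (hv : Continuous v) :
    ENNReal.ofReal (L2norm v) = eLpNorm v 2 squareMeasure := by
  suffices h : ENNReal.ofReal (L2norm v) ^ 2 = eLpNorm v 2 squareMeasure ^ 2 from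
    le_antisymm ((ENNReal.pow_le_pow_left_iff two_ne_zero).1 h.le)
      ((ENNReal.pow_le_pow_left_iff two_ne_zero).1 h.ge)
  have h_integrable : IntegrableOn (fun p => v p ^ 2) Omega2 :=
    ((by fun_prop : Continuous fun p => v p ^ 2).continuousOn.integrableOn_compact
      (isCompact_Icc.prod isCompact_Icc)).mono_set
      (Set.prod_mono Set.Ioo_subset_Icc_self Set.Ioo_subset_Icc_self)
  have h0 : 0 ≤ ∫ p in Omega2, v p ^ 2 := integral_nonneg fun p => sq_nonneg _
  simp only [L2norm]
  rw [← ENNReal.ofReal_pow (Real.sqrt_nonneg _), Real.sq_sqrt h0, eLpNorm_two_sq,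
    ofReal_integral_eq_lintegral_ofReal h_integrable
      (Filter.Eventually.of_forall fun p => sq_nonneg _)]

theorem energyNorm_le {v : ℝ × ℝ → ℝ} {A B C : ℝ} (hA : 0 ≤ A) (hB : 0 ≤ B) (hC : 0 ≤ C)
    (hmX : AEMeasurable (pderivX v) squareMeasure) (hmY : AEMeasurable (pderivY v) squareMeasure)
    (hX : eLpNorm (pderivX v) 2 squareMeasure ≤ ENNReal.ofReal A)
    (hY : eLpNorm (pderivY v) 2 squareMeasure ≤ ENNReal.ofReal B)
    (hV : eLpNorm v 2 squareMeasure ≤ ENNReal.ofReal C) : energyNorm v ≤ A + B + C := by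
  have sq_le : ∀ {f : ℝ × ℝ → ℝ} {c : ℝ}, 0 ≤ c → eLpNorm f 2 squareMeasure ≤ ENNReal.ofReal c →
      ∫⁻ p, ENNReal.ofReal (f p ^ 2) ∂squareMeasure ≤ ENNReal.ofReal (c ^ 2) := by
    intro f c hc h
    rw [← eLpNorm_two_sq, ENNReal.ofReal_pow hc]
    exact pow_le_pow_left' h 2
  refine Real.sqrt_le_iff.2 ⟨by positivity, ?_⟩
  calc ∫ p in Omega2, (pderivX v p ^ 2 + pderivY v p ^ 2 + v p ^ 2)
      ≤ ‖∫ p in Omega2, (pderivX v p ^ 2 + pderivY v p ^ 2 + v p ^ 2)‖ := Real.le_norm_self _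
    _ ≤ (∫⁻ p, ENNReal.ofReal ‖pderivX v p ^ 2 + pderivY v p ^ 2 + v p ^ 2‖
          ∂squareMeasure).toReal := norm_integral_le_lintegral_norm _
    _ ≤ A ^ 2 + B ^ 2 + C ^ 2 := by
        refine ENNReal.toReal_le_of_le_ofReal (by positivity) ?_
        have e : ∀ p, ENNReal.ofReal ‖pderivX v p ^ 2 + pderivY v p ^ 2 + v p ^ 2‖
            = ENNReal.ofReal (pderivX v p ^ 2) + ENNReal.ofReal (pderivY v p ^ 2)
              + ENNReal.ofReal (v p ^ 2) := by
          intro p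
          rw [Real.norm_of_nonneg (by positivity), ENNReal.ofReal_add (by positivity)
            (by positivity), ENNReal.ofReal_add (by positivity) (by positivity)]
        simp_rw [e]
        rw [lintegral_add_left' (by fun_prop), lintegral_add_left' (by fun_prop),
          ENNReal.ofReal_add (by positivity) (by positivity),
          ENNReal.ofReal_add (by positivity) (by positivity)]
        gcongr
        exacts [sq_le hA hX, sq_le hB hY, sq_le hC hV]
    _ ≤ (A + B + C) ^ 2 := by nlinarith [mul_nonneg hA hB, mul_nonneg hA hC, mul_nonneg hB hC]

theorem sum_inv_two_pow_mul_le (m : ℕ) :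
    ∑ a ∈ range m, (1 : ℝ) / 2 ^ m * (1 / 2 ^ a) ≤ 1 / 2 ^ m * 2 := by
  rw [← Finset.mul_sum]
  gcongr
  exact sum_inv_two_pow_le m

theorem sum_inv_two_pow_mul_reflect_le (m : ℕ) :
    ∑ a ∈ range m, (1 : ℝ) / 2 ^ m * (1 / 2 ^ (m - a)) ≤ 1 / 2 ^ m * 2 := by
  rw [← Finset.mul_sum]
  gcongr
  exact sum_inv_two_pow_reflect_le m

section GlobalBound

variable {u : ℝ × ℝ → ℝ} {m : ℕ}

theorem one_div_two_pow_split {a m : ℕ} (ha : a < m) :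
    (1 : ℝ) / 2 ^ m = 1 / 2 ^ a * (1 / 2 ^ (m - a)) := by
  rw [one_div_mul_one_div, ← pow_add]
  congr 3
  omega

theorem eLpNorm_pderivX_error_le (hu : VanishOnBoundary u) (hd : ContDiff ℝ 4 u) (hm : 1 ≤ m) :
    eLpNorm (pderivX fun p => u p - msInterp (2 ^ m) (m - 1) u p) 2 squareMeasure
      ≤ ENNReal.ofReal (1 / 2 ^ m) * eLpNorm (pderivX (pderivX u)) 2 squareMeasure
        + ENNReal.ofReal (2 * (1 / 2 ^ m * 2)) * eLpNorm (uxxyy u) 2 squareMeasure := by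
  have hX := contDiff_pderivX (n := 3) hd
  have hXX := contDiff_pderivX (n := 2) hX
  have hmeas : ∀ n k : ℕ, Measurable (pderivX (errX (2 ^ n) (errY (2 ^ k) u))) := fun n k =>
    measurable_pderivX (continuous_errX (by positivity)
      (continuous_errY (by positivity) hd.continuous))
  refine eLpNorm_telescope_le (pderivX_error_ae hu hd hm)
    (measurable_pderivX (continuous_errX (by positivity) hd.continuous))
    (fun a => hmeas _ _) (fun a => hmeas _ _) (fun a _ => by positivity)
    (sum_inv_two_pow_mul_reflect_le m) ?_ ?_ ?_
  · simpa using eLpNorm_pderivX_errX_le (n := 2 ^ m) (by positivity) hd.continuous hXX.continuous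
      (hasDerivAt_pderivX (hd.differentiable (by simp)))
      (hasDerivAt_pderivX (hX.differentiable (by simp)))
  all_goals
    intro a ha
    refine (eLpNorm_pderivX_errX_errY_le (by positivity) (by positivity) hd).trans
      (mul_le_mul' (ENNReal.ofReal_le_ofReal ?_) le_rfl)
    rw [one_div_two_pow_split ha, sq, mul_assoc]
    push_cast
    gcongr <;> norm_num

theorem eLpNorm_pderivY_error_le (hu : VanishOnBoundary u) (hd : ContDiff ℝ 4 u) (hm : 1 ≤ m) :
    eLpNorm (pderivY fun p => u p - msInterp (2 ^ m) (m - 1) u p) 2 squareMeasure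
      ≤ ENNReal.ofReal (1 / 2 ^ m) * eLpNorm (pderivX (pderivY u)) 2 squareMeasure
        + ENNReal.ofReal (2 * (1 / 2 ^ m * 2)) * eLpNorm (uxxyy u) 2 squareMeasure := by
  have hY := contDiff_pderivY (n := 3) hd
  have hYX := contDiff_pderivX (n := 2) hY
  have hmeas : ∀ n k : ℕ, Measurable (pderivY (errX (2 ^ n) (errY (2 ^ k) u))) := fun n k =>
    measurable_pderivY (continuous_errX (by positivity)
      (continuous_errY (by positivity) hd.continuous))
  refine eLpNorm_telescope_le (pderivY_error_ae hu hd hm)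
    (measurable_pderivY (continuous_errX (by positivity) hd.continuous))
    (fun a => hmeas _ _) (fun a => hmeas _ _) (fun a _ => by positivity)
    (sum_inv_two_pow_mul_le m) ?_ ?_ ?_
  · have e : pderivY (errX (2 ^ m) u) = errX (2 ^ m) (pderivY u) :=
      funext fun p => (hasDerivAt_errX (hd.differentiable (by simp)) p.1 p.2).deriv
    rw [e]
    simpa using eLpNorm_errX_le (n := 2 ^ m) (by positivity) hY.continuous hYX.continuous
      (hasDerivAt_pderivX (hY.differentiable (by simp)))
  all_goals
    intro a ha
    refine (eLpNorm_pderivY_errX_errY_le (by positivity) (by positivity) hd).trans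
      (mul_le_mul' (ENNReal.ofReal_le_ofReal ?_) le_rfl)
    rw [one_div_two_pow_split ha, mul_comm ((1 : ℝ) / 2 ^ a), mul_assoc, sq]
    push_cast
    gcongr <;> norm_num

theorem eLpNorm_error_le (hu : VanishOnBoundary u) (hd : ContDiff ℝ 4 u) (hm : 1 ≤ m) :
    eLpNorm (fun p => u p - msInterp (2 ^ m) (m - 1) u p) 2 squareMeasure
      ≤ ENNReal.ofReal (1 / 2 ^ m) * eLpNorm (pderivX (pderivX u)) 2 squareMeasure
        + ENNReal.ofReal (2 * (1 / 2 ^ m * 2)) * eLpNorm (uxxyy u) 2 squareMeasure := by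
  have hX := contDiff_pderivX (n := 3) hd
  have hXX := contDiff_pderivX (n := 2) hX
  have hmeas : ∀ n k : ℕ, Measurable (errX (2 ^ n) (errY (2 ^ k) u)) := fun n k =>
    (continuous_errX (by positivity) (continuous_errY (by positivity) hd.continuous)).measurable
  have hae : (fun p => u p - msInterp (2 ^ m) (m - 1) u p) =ᵐ[squareMeasure] errX (2 ^ m) u
      + ∑ a ∈ range m, (errX (2 ^ a) (errY (2 ^ (m - a)) u)
        - errX (2 ^ (a + 1)) (errY (2 ^ (m - a)) u)) := by
    filter_upwards [ae_restrict_mem isOpen_Omega2.measurableSet] with p hp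
    simp only [Pi.add_apply, Finset.sum_apply, Pi.sub_apply]
    exact sub_msInterp_eq hu hm hp
  have hle : ∀ n : ℕ, (1 : ℝ) / 2 ^ n ≤ 1 := fun n => by
    rw [div_le_one (by positivity)]; exact one_le_pow₀ one_le_two
  refine eLpNorm_telescope_le hae
    (continuous_errX (by positivity) hd.continuous).measurable
    (fun a => hmeas _ _) (fun a => hmeas _ _) (fun a _ => by positivity)
    (sum_inv_two_pow_mul_le m) ?_ ?_ ?_
  · refine (eLpNorm_errX_le_second (n := 2 ^ m) (by positivity) hd.continuous hXX.continuous
      (hasDerivAt_pderivX (hd.differentiable (by simp)))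
      (hasDerivAt_pderivX (hX.differentiable (by simp)))).trans ?_
    gcongr
    push_cast
    exact pow_le_of_le_one (by positivity) (hle m) two_ne_zero
  all_goals
    intro a ha
    refine (eLpNorm_errX_errY_le (by positivity) (by positivity) hd).trans
      (mul_le_mul' (ENNReal.ofReal_le_ofReal ?_) le_rfl)
    rw [one_div_two_pow_split ha, mul_right_comm, ← sq]
    push_cast
    gcongr
    all_goals first
      | exact pow_le_of_le_one (by positivity) (hle _) two_ne_zero
      | omega
      | norm_num

theorem energyNorm_error_le (hu : VanishOnBoundary u) (hd : ContDiff ℝ 4 u) (hm : 1 ≤ m) :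
    energyNorm (fun p => u p - msInterp (2 ^ m) (m - 1) u p) ≤
      12 * ((2 : ℝ) ^ m)⁻¹ * (semi2 u + L2norm (uxxyy u)) := by
  have hX := contDiff_pderivX (n := 3) hd
  have hXX := contDiff_pderivX (n := 2) hX
  have hY := contDiff_pderivY (n := 3) hd
  have hYX := contDiff_pderivX (n := 2) hY
  have hYY := contDiff_pderivY (n := 2) hY
  have hM := contDiff_pderivX (n := 0) (contDiff_pderivX (n := 1) hYY)
  have nonneg : ∀ v, 0 ≤ L2norm v := fun v => Real.sqrt_nonneg _
  have conv : ∀ v, Continuous v → ENNReal.ofReal (1 / 2 ^ m) * eLpNorm v 2 squareMeasure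
        + ENNReal.ofReal (2 * (1 / 2 ^ m * 2)) * eLpNorm (uxxyy u) 2 squareMeasure
      = ENNReal.ofReal (1 / 2 ^ m * (L2norm v + 4 * L2norm (uxxyy u))) := by
    intro v hv
    have := nonneg v
    have := nonneg (uxxyy u)
    rw [← ofReal_L2norm hv, ← ofReal_L2norm (v := uxxyy u) hM.continuous,
      ← ENNReal.ofReal_mul (by positivity), ← ENNReal.ofReal_mul (by positivity),
      ← ENNReal.ofReal_add (by positivity) (by positivity)]
    congr 1; ring
  have h1 := (eLpNorm_pderivX_error_le hu hd hm).trans_eq (conv _ hXX.continuous)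
  have h2 := (eLpNorm_pderivY_error_le hu hd hm).trans_eq (conv _ hYX.continuous)
  have h3 := (eLpNorm_error_le hu hd hm).trans_eq (conv _ hXX.continuous)
  have n1 := nonneg (pderivX (pderivX u))
  have n2 := nonneg (pderivX (pderivY u))
  have n3 := nonneg (pderivY (pderivY u))
  have n4 := nonneg (uxxyy u)
  have hcont : Continuous fun p => u p - msInterp (2 ^ m) (m - 1) u p := by
    have hpos : ∀ i ≤ m, 0 < 2 ^ m / 2 ^ i := fun i hi =>
      Nat.div_pos (Nat.pow_le_pow_right two_pos hi) (by positivity)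
    have hi : ∀ a b : ℕ, 0 < a → 0 < b → Continuous (interp a b u) := fun a b ha hb => by
      have := continuous_hat ha
      have := continuous_hat hb
      unfold interp
      fun_prop
    refine hd.continuous.sub (Continuous.sub ?_ ?_) <;>
      refine continuous_finsetSum _ fun i h => hi _ _ (hpos _ ?_) (hpos _ ?_) <;>
      simp only [Finset.mem_range, Finset.mem_Icc] at h <;> omega
  refine (energyNorm_le (by positivity) (by positivity) (by positivity)
    (measurable_pderivX hcont).aemeasurable (measurable_pderivY hcont).aemeasurable
    h1 h2 h3).trans ?_
  have hh : (0 : ℝ) < 1 / 2 ^ m := by positivity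
  rw [← one_div, semi2]
  nlinarith [mul_nonneg hh.le n1, mul_nonneg hh.le n2, mul_nonneg hh.le n3, mul_nonneg hh.le n4]

end GlobalBound

theorem exists_global_extension {u : ℝ × ℝ → ℝ} (hu : C4Near u) :
    ∃ w : ℝ × ℝ → ℝ, ContDiff ℝ 4 w ∧ Set.EqOn u w unitSquare := by
  obtain ⟨U, hU, hsub, hd⟩ := hu
  have hK : IsCompact unitSquare := isCompact_Icc.prod isCompact_Icc
  obtain ⟨L, hL, hKL, hLU⟩ := exists_compact_between hK hU hsub
  obtain ⟨χ, h1, h0, -⟩ := exists_contMDiffMap_one_nhds_of_subset_interior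
    (modelWithCornersSelf ℝ (ℝ × ℝ)) (n := 4) hK.isClosed hKL
  have hχ : ContDiff ℝ 4 χ := χ.contMDiff.contDiff
  refine ⟨fun p => χ p * u p, contDiff_iff_contDiffAt.2 fun p => ?_, fun p hp => ?_⟩
  · by_cases hp : p ∈ L
    · exact hχ.contDiffAt.mul (hd.contDiffAt (hU.mem_nhds (hLU hp)))
    · refine (contDiffAt_const (c := (0 : ℝ))).congr_of_eventuallyEq ?_
      filter_upwards [hL.isClosed.isOpen_compl.mem_nhds hp] with q hq
      rw [h0 q hq, zero_mul]
  · simp [h1.self_of_nhdsSet p hp]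

theorem L2norm_congr {v w : ℝ × ℝ → ℝ} (h : Set.EqOn v w Omega2) : L2norm v = L2norm w := by
  refine congrArg Real.sqrt (setIntegral_congr_fun isOpen_Omega2.measurableSet fun p hp => ?_)
  simp only [h hp]

theorem energyNorm_congr {v w : ℝ × ℝ → ℝ} (h : Set.EqOn v w Omega2) :
    energyNorm v = energyNorm w := by
  refine congrArg Real.sqrt (setIntegral_congr_fun isOpen_Omega2.measurableSet fun p hp => ?_)
  simp only [h hp, pderivX_eqOn isOpen_Omega2 h hp, pderivY_eqOn isOpen_Omega2 h hp]

theorem Omega2_subset_unitSquare : Omega2 ⊆ unitSquare :=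
  Set.prod_mono Set.Ioo_subset_Icc_self Set.Ioo_subset_Icc_self

theorem interp_congr {v w : ℝ × ℝ → ℝ} (h : Set.EqOn v w unitSquare) (a b : ℕ) :
    interp a b v = interp a b w := by
  have hnode : ∀ n : ℕ, ∀ i ∈ range (n + 1), (i : ℝ) / n ∈ Set.Icc (0 : ℝ) 1 := fun n i hi =>
    ⟨by positivity, div_le_one_of_le₀
      (by exact_mod_cast Nat.lt_succ_iff.1 (Finset.mem_range.1 hi)) (by positivity)⟩
  funext p
  exact Finset.sum_congr rfl fun i hi => Finset.sum_congr rfl fun j hj => by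
    rw [h ⟨hnode a i hi, hnode b j hj⟩]

/-- Taking the maximal level `k̃ = log₂(N) − 1 = m − 1`, the multiscale interpolant satisfies
`|||u − I^{(k̃)}_{N,N}u||| ≤ C N⁻¹ (|u|₂ + ‖∂⁴u/∂x²∂y²‖_{0,Ω})` for `N = 2^m`. -/
theorem multiscale_interpolant_maximal_level_bound :
    ∃ C : ℝ, 0 < C ∧ ∀ m : ℕ, 1 ≤ m →
      ∀ u : ℝ × ℝ → ℝ, C4Near u → VanishOnBoundary u →
        energyNorm (fun p => u p - msInterp (2 ^ m) (m - 1) u p) ≤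
          C * ((2 : ℝ) ^ m)⁻¹ * (semi2 u + L2norm (uxxyy u)) := by
  refine ⟨12, by norm_num, fun m hm u hu hv => ?_⟩
  obtain ⟨w, hw, huw⟩ := exists_global_extension hu
  have hO : Set.EqOn u w Omega2 := huw.mono Omega2_subset_unitSquare
  have hX := fun {v w : ℝ × ℝ → ℝ} => pderivX_eqOn (v := v) (w := w) isOpen_Omega2
  have hY := fun {v w : ℝ × ℝ → ℝ} => pderivY_eqOn (v := v) (w := w) isOpen_Omega2
  have hvw : VanishOnBoundary w := fun p hp hb => by rw [← huw hp, hv p hp hb]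
  have he : energyNorm (fun p => u p - msInterp (2 ^ m) (m - 1) u p)
      = energyNorm (fun p => w p - msInterp (2 ^ m) (m - 1) w p) := by
    refine energyNorm_congr fun p hp => ?_
    simp only [msInterp, interp_congr huw, hO hp]
  have hs : semi2 u = semi2 w := by
    unfold semi2
    rw [L2norm_congr (hX (hX hO)), L2norm_congr (hX (hY hO)), L2norm_congr (hY (hY hO))]
  have hM : L2norm (uxxyy u) = L2norm (uxxyy w) := L2norm_congr (hX (hX (hY (hY hO))))
  rw [he, hs, hM]
  exact energyNorm_error_le hvw hw hm
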